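/- Let n ≥ 1, let a ≥ 0 and c be real numbers, let f : ℝⁿ → ℝ be a smooth everywhere positive function, let F : ℝⁿ → ℝ be a smooth function with compact support, and let R : ℝⁿ → ℝ be a continuous function. Assume that a·(Δf)(x)/f(x) + R(x) ≥ c for all x ∈ ℝⁿ, where Δu := −Σᵢ ∂²u/∂xᵢ². Then, with h := f·F, ∫_{ℝⁿ} (a·‖∇h‖² + R·h²) dx ≥ c·∫_{ℝⁿ} h² dx. (This is the abstract form of the paper's conclusion that the first eigenvalue of the conformal Laplacian satisfies λ₁(L) ≥ inf_M (f⁻¹ L f) for every smooth positive function f, with L = 4((n−1)/(n−2))Δ + R and a = 4(n−1)/(n−2).) -/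

import Mathlib

open MeasureTheory

/-- The geometers' (nonnegative) Laplacian on `ℝⁿ`: `Δu = -∑ i ∂²u/∂xᵢ²`. -/
noncomputable def geomLaplacian {n : ℕ} (u : EuclideanSpace ℝ (Fin n) → ℝ)
    (x : EuclideanSpace ℝ (Fin n)) : ℝ :=
  -∑ i : Fin n,
    fderiv ℝ (fun y => fderiv ℝ u y (EuclideanSpace.single i 1)) x (EuclideanSpace.single i 1)

lemma norm_gradient_sq_eq {n : ℕ} (u : EuclideanSpace ℝ (Fin n) → ℝ)
    (x : EuclideanSpace ℝ (Fin n)) :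
    ‖gradient u x‖ ^ 2 = ∑ i : Fin n, (fderiv ℝ u x (EuclideanSpace.single i 1)) ^ 2 := by
  rw [EuclideanSpace.norm_sq_eq]
  refine Finset.sum_congr rfl fun i _ => ?_
  have h : inner ℝ (gradient u x) (EuclideanSpace.single i (1 : ℝ))
      = fderiv ℝ u x (EuclideanSpace.single i 1) := by
    simp [gradient]
  rw [← h, EuclideanSpace.inner_single_right]
  simp

theorem first_eigenvalue_lower_bound (n : ℕ) (hn : 1 ≤ n)
    (a c : ℝ) (ha : 0 ≤ a)
    (f F : EuclideanSpace ℝ (Fin n) → ℝ)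
    (hf : ContDiff ℝ (⊤ : ℕ∞) f) (hfpos : ∀ x, 0 < f x)
    (hF : ContDiff ℝ (⊤ : ℕ∞) F) (hFc : HasCompactSupport F)
    (R : EuclideanSpace ℝ (Fin n) → ℝ) (hR : Continuous R)
    (hlb : ∀ x, c ≤ a * geomLaplacian f x / f x + R x) :
    c * ∫ x, (f x * F x) ^ 2 ≤
      ∫ x, (a * ‖gradient (fun y => f y * F y) x‖ ^ 2 + R x * (f x * F x) ^ 2) := by
  have h1 : ∀ (u : EuclideanSpace ℝ (Fin n) → ℝ) (v : EuclideanSpace ℝ (Fin n)),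
      ContDiff ℝ (⊤ : ℕ∞) u → ContDiff ℝ (⊤ : ℕ∞) (fun y => fderiv ℝ u y v) := by
    intro u v hu
    exact (hu.fderiv_right (m := (⊤ : ℕ∞)) (by simp)).clm_apply contDiff_const
  have hdf : Differentiable ℝ f := hf.differentiable (by simp)
  have hdF : Differentiable ℝ F := hF.differentiable (by simp)
  set g : EuclideanSpace ℝ (Fin n) → ℝ := fun y => f y * F y ^ 2 with hg
  set h : EuclideanSpace ℝ (Fin n) → ℝ := fun y => f y * F y with hh
  have hgs : ContDiff ℝ (⊤ : ℕ∞) g := hf.mul (hF.pow 2)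
  have hhs : ContDiff ℝ (⊤ : ℕ∞) h := hf.mul hF
  have hhc : HasCompactSupport h := hFc.mul_left
  have hgc : HasCompactSupport g := by
    have : g = fun y => h y * F y := by funext y; simp only [hg, hh]; ring
    rw [this]; exact hFc.mul_left
  have hgd : ∀ v, HasCompactSupport (fun y => fderiv ℝ g y v) := fun v => hgc.fderiv_apply ℝ v
  have hhd : ∀ v, HasCompactSupport (fun y => fderiv ℝ h y v) := fun v => hhc.fderiv_apply ℝ v
  let e : Fin n → EuclideanSpace ℝ (Fin n) := fun i => EuclideanSpace.single i 1
  have I1 : ∀ i, Integrable (fun x => fderiv ℝ f x (e i) * fderiv ℝ g x (e i)) := fun i =>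
    ((h1 f _ hf).continuous.mul (h1 g _ hgs).continuous).integrable_of_hasCompactSupport
      (hgd _).mul_left
  have I2 : ∀ i, Integrable
      (fun x => fderiv ℝ (fun y => fderiv ℝ f y (e i)) x (e i) * g x) := fun i =>
    ((h1 _ _ (h1 f _ hf)).continuous.mul hgs.continuous).integrable_of_hasCompactSupport
      hgc.mul_left
  have I3 : ∀ i, Integrable (fun x => fderiv ℝ f x (e i) * g x) := fun i =>
    ((h1 f _ hf).continuous.mul hgs.continuous).integrable_of_hasCompactSupport hgc.mul_left
  have parts : ∀ i, ∫ x, (fderiv ℝ f x (e i) * fderiv ℝ g x (e i)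
      + fderiv ℝ (fun y => fderiv ℝ f y (e i)) x (e i) * g x) = 0 := by
    intro i
    rw [integral_add (I1 i) (I2 i),
      integral_mul_fderiv_eq_neg_fderiv_mul_of_integrable (I2 i) (I1 i) (I3 i)
        (fun x _ => (h1 f _ hf).differentiable (by simp) x)
        (fun x _ => hgs.differentiable (by simp) x)]
    ring
  have I4 : Integrable (fun x => a * ∑ i, (fderiv ℝ f x (e i) * fderiv ℝ g x (e i)
      + fderiv ℝ (fun y => fderiv ℝ f y (e i)) x (e i) * g x)) :=
    (integrable_finsetSum _ fun i _ => (I1 i).add (I2 i)).const_mul a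
  have hsq : HasCompactSupport (fun x => h x ^ 2) := by
    have : (fun x => h x ^ 2) = fun x => h x * h x := by funext x; ring
    rw [this]; exact hhc.mul_left
  have I5 : Integrable (fun x => c * h x ^ 2) :=
    ((hhs.continuous.pow 2).integrable_of_hasCompactSupport hsq).const_mul c
  have I6 : Integrable (fun x => R x * h x ^ 2) :=
    (hR.mul (hhs.continuous.pow 2)).integrable_of_hasCompactSupport hsq.mul_left
  have I7 : Integrable (fun x => a * ‖gradient h x‖ ^ 2 + R x * h x ^ 2) := by
    refine Integrable.add ?_ I6
    simp only [norm_gradient_sq_eq]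
    refine (integrable_finsetSum _ fun i _ => ?_).const_mul a
    simp only [pow_two]
    exact ((h1 h _ hhs).continuous.mul (h1 h _ hhs).continuous).integrable_of_hasCompactSupport
      (hhd _).mul_left
  have key : ∫ x, (c * h x ^ 2 + a * ∑ i, (fderiv ℝ f x (e i) * fderiv ℝ g x (e i)
      + fderiv ℝ (fun y => fderiv ℝ f y (e i)) x (e i) * g x)) = c * ∫ x, h x ^ 2 := by
    rw [integral_add I5 I4, integral_const_mul, integral_const_mul,
      integral_finsetSum]
    · simp [parts]
    · exact fun i _ => (I1 i).add (I2 i)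
  change c * ∫ x, h x ^ 2 ≤ ∫ x, (a * ‖gradient h x‖ ^ 2 + R x * h x ^ 2)
  rw [← key]
  refine integral_mono (I5.add I4) I7 fun x => ?_
  have dh : ∀ v, fderiv ℝ h x v = f x * fderiv ℝ F x v + F x * fderiv ℝ f x v := by
    intro v
    have := ((hdf x).hasFDerivAt.mul (hdF x).hasFDerivAt).fderiv
    change fderiv ℝ h x = _ at this
    rw [this]; simp
  have dg : ∀ v, fderiv ℝ g x v
      = f x * (2 * F x * fderiv ℝ F x v) + F x ^ 2 * fderiv ℝ f x v := by
    intro v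
    have := ((hdf x).hasFDerivAt.mul ((hdF x).hasFDerivAt.pow 2)).fderiv
    change fderiv ℝ g x = _ at this
    rw [this]; simp
  have hp := hfpos x
  have hl := hlb x
  have hl2 : c * h x ^ 2 ≤ a * geomLaplacian f x * g x + R x * h x ^ 2 := by
    have := mul_le_mul_of_nonneg_right hl (sq_nonneg (h x))
    refine this.trans_eq ?_
    simp only [hh, hg]; field_simp
  have hgrad : ∑ i, fderiv ℝ f x (e i) * fderiv ℝ g x (e i) ≤ ‖gradient h x‖ ^ 2 := by
    rw [norm_gradient_sq_eq]
    refine Finset.sum_le_sum fun i _ => ?_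
    change _ ≤ (fderiv ℝ h x (e i)) ^ 2
    rw [dh, dg]
    nlinarith [sq_nonneg (f x * fderiv ℝ F x (e i))]
  have hgrad2 := mul_le_mul_of_nonneg_left hgrad ha
  have hlap : ∑ i, fderiv ℝ (fun y => fderiv ℝ f y (e i)) x (e i) * g x
      = - geomLaplacian f x * g x := by
    rw [← Finset.sum_mul]; simp [geomLaplacian, e]
  change c * h x ^ 2 + a * _ ≤ a * ‖gradient h x‖ ^ 2 + R x * h x ^ 2
  rw [Finset.sum_add_distrib, hlap]
  linarith
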